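/- arXiv:math/9807165 — 5 statements merged into one kernel-verified Lean document; each statement's English description precedes it below -/
import Mathlib

section
/- If T₁, …, Tₙ (with n ≥ 2) is an asteroidal collection of subtrees of a finite tree T, then T has at least n leaves (vertices of degree 1). -/
/-- A subtree representation of a digraph with edge relation `E` on vertex type `V`
in a host graph `T` on vertex type `W`: each digraph vertex `v` gets a source set
`src v` and a sink set `snk v`, each inducing a connected (hence nonempty) subgraph
of `T`, such that `E u v` holds iff `src u` meets `snk v`. -/
structure SubtreeRep {V W : Type} (E : V → V → Prop) (T : SimpleGraph W) where
  src : V → Set W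
  snk : V → Set W
  src_connected : ∀ v, (T.induce (src v)).Connected
  snk_connected : ∀ v, (T.induce (snk v)).Connected
  rep : ∀ u v, E u v ↔ (src u ∩ snk v).Nonempty

/-- The set of leaves (vertices of degree 1) of a graph. -/
def treeLeaves {W : Type} (T : SimpleGraph W) : Set W :=
  {w | (T.neighborSet w).ncard = 1}

/-- The leafage of a digraph: the minimum number of leaves of a finite host tree in
which the digraph has a subtree representation. -/
noncomputable def digLeafage {V : Type} (E : V → V → Prop) : ℕ :=
  sInf {k | ∃ (W : Type) (_ : Fintype W) (T : SimpleGraph W),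
    T.IsTree ∧ Nonempty (SubtreeRep E T) ∧ (treeLeaves T).ncard = k}

/-- The catch leafage of a digraph: the minimum number of leaves of a finite host tree
in which the digraph has a subtree representation all of whose sink sets are single
vertices. -/
noncomputable def catchLeafage {V : Type} (E : V → V → Prop) : ℕ :=
  sInf {k | ∃ (W : Type) (_ : Fintype W) (T : SimpleGraph W) (R : SubtreeRep E T),
    T.IsTree ∧ (∀ v, ∃ x, R.snk v = {x}) ∧ (treeLeaves T).ncard = k}

/-- `C` is between `A` and `B` in `T`: `A` and `B` are disjoint and the unique path of
`T` from `A` to `B` (i.e. the path meeting `A` only at its first vertex and `B` only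
at its last vertex) contains a vertex of `C` (possibly an endpoint). -/
def Between {W : Type} (T : SimpleGraph W) (A B C : Set W) : Prop :=
  A ∩ B = ∅ ∧ ∃ (a b : W) (p : T.Walk a b), a ∈ A ∧ b ∈ B ∧ p.IsPath ∧
    (∀ x ∈ p.support, x ∈ A → x = a) ∧ (∀ x ∈ p.support, x ∈ B → x = b) ∧
    ∃ x ∈ C, x ∈ p.support

/-- An asteroidal collection of sets in `T`: pairwise disjoint, and no member is
between two other members. -/
def Asteroidal {W ι : Type} (T : SimpleGraph W) (F : ι → Set W) : Prop :=
  (∀ i j, i ≠ j → F i ∩ F j = ∅) ∧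
  ∀ i j k, i ≠ j → i ≠ k → j ≠ k → ¬ Between T (F i) (F j) (F k)

/-- The star `K_{1,n}`: the center `none` is adjacent to the `n` leaves `some i`. -/
def starGraph (n : ℕ) : SimpleGraph (Option (Fin n)) :=
  SimpleGraph.fromRel (fun a _ => a = none)

/-- A Ferrers digraph: the successor sets are linearly ordered by inclusion. -/
def IsFerrers {V : Type} (F : V → V → Prop) : Prop :=
  ∀ u u' : V, {v | F u v} ⊆ {v | F u' v} ∨ {v | F u' v} ⊆ {v | F u v}

/-- The Ferrers dimension `f(D)`: the minimum number of Ferrers digraphs whose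
intersection is `E`. -/
noncomputable def ferrersDim {V : Type} (E : V → V → Prop) : ℕ :=
  sInf {k | ∃ F : Fin k → V → V → Prop,
    (∀ i, IsFerrers (F i)) ∧ (∀ u v, E u v ↔ ∀ i, F i u v)}

/-- `f*(D)`: the minimum number of pairwise edge-disjoint Ferrers digraphs whose
union is the complement of `E` in `V × V`. -/
noncomputable def fstar {V : Type} (E : V → V → Prop) : ℕ :=
  sInf {k | ∃ F : Fin k → V → V → Prop,
    (∀ i, IsFerrers (F i)) ∧
    (∀ i j, i ≠ j → ∀ u v, ¬ (F i u v ∧ F j u v)) ∧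
    (∀ u v, ¬ E u v ↔ ∃ i, F i u v)}

/-- The width of the incidence poset `P(D)`: the maximum size of an antichain (under
inclusion) of predecessor sets of the digraph `E`. -/
noncomputable def incWidth {V : Type} (E : V → V → Prop) : ℕ :=
  sSup {k | ∃ A : Finset (Set V),
    (↑A : Set (Set V)) ⊆ Set.range (fun v => {u | E u v}) ∧
    IsAntichain (· ⊆ ·) (↑A : Set (Set V)) ∧ A.card = k}

/-- The digraph `D_n` with adjacency matrix `J - I`: all pairs of distinct vertices. -/
def DnRel (n : ℕ) (i j : Fin n) : Prop := i ≠ j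

/-- The digraph `E_n` with adjacency matrix `[[I, Y], [Yᵀ, 0]]` (vertex `n-1` playing
the role of the last row/column). -/
def EnRel (n : ℕ) (i j : Fin n) : Prop :=
  (i.val < n - 1 ∧ j.val < n - 1 ∧ i = j) ∨
  (i.val < n - 1 ∧ j.val = n - 1) ∨
  (i.val = n - 1 ∧ j.val < n - 1)

/-- The digraph `C_n`: a directed `n`-cycle plus a loop at each vertex. -/
def CnRel (n : ℕ) (i j : Fin n) : Prop := j = i ∨ j.val = (i.val + 1) % n

/-- The digraph `M_{k,m}` on `Fin k × Fin m`: identity diagonal blocks, all-ones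
blocks above the diagonal, all-zeros blocks below. -/
def MkmRel (k m : ℕ) (p q : Fin k × Fin m) : Prop :=
  p.1 < q.1 ∨ (p.1 = q.1 ∧ p.2 = q.2)

/-- The digraph `F_n` with adjacency matrix `[[I, Y], [Yᵀ, 1]]` (vertex `n-1` playing
the role of the last row/column). -/
def FnRel (n : ℕ) (i j : Fin n) : Prop := i = j ∨ i.val = n - 1 ∨ j.val = n - 1

/-- The digraph `P_n`: a directed path `1 → 2 → ⋯ → n` plus a loop at each vertex. -/
def PnRel (n : ℕ) (i j : Fin n) : Prop := j = i ∨ j.val = i.val + 1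

/-!
A path meeting three members, shortened at both ends as far as it still meets all three, runs from
one member to a second one and meets a third on the way; so a path meets at most two members. Hence
choosing one vertex in each member gives a set no three of whose vertices lie on a path. Fix a
vertex `r` of such a set and, for each other vertex `a`, prolong the path from `r` to `a` beyond `a`
up to a leaf. Equal leaves would give equal paths, so these leaves are distinct, and prolonging one
of the paths beyond `r` gives one leaf more.
-/

/-- A set of vertices is in general position if no three of them lie on a common path. The usual
notion speaks of geodesics; in a tree every path is one. -/
def InGeneralPosition {V : Type*} (G : SimpleGraph V) (A : Set V) : Prop :=
  ∀ ⦃u v : V⦄ (p : G.Walk u v), p.IsPath → ∀ ⦃x y z : V⦄, x ∈ A → y ∈ A → z ∈ A →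
    x ∈ p.support → y ∈ p.support → z ∈ p.support → x = y ∨ x = z ∨ y = z

theorem exists_isSubwalk_meeting_first_only_at_start {V ι : Type*} {G : SimpleGraph V}
    {F : ι → Set V} {s : Set ι} (hs : s.Nonempty) {u v : V} (p : G.Walk u v)
    (hp : ∀ i ∈ s, ∃ x ∈ p.support, x ∈ F i) :
    ∃ i ∈ s, ∃ a ∈ F i, ∃ q : G.Walk a v, q.IsSubwalk p ∧
      (∀ j ∈ s, ∃ x ∈ q.support, x ∈ F j) ∧ ∀ x ∈ q.support, x ∈ F i → x = a := by
  induction p with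
  | nil =>
    obtain ⟨i, hi⟩ := hs
    obtain ⟨x, hx, hxi⟩ := hp i hi
    obtain rfl := SimpleGraph.Walk.mem_support_nil_iff.1 hx
    exact ⟨i, hi, x, hxi, .nil, SimpleGraph.Walk.isSubwalk_rfl _, hp, by simp⟩
  | @cons u _ _ h p ih =>
    by_cases htail : ∀ i ∈ s, ∃ x ∈ p.support, x ∈ F i
    · obtain ⟨i, hi, a, ha, q, hqp, hq⟩ := ih htail
      exact ⟨i, hi, a, ha, q, hqp.cons h, hq⟩
    · push Not at htail
      obtain ⟨i, hi, hpi⟩ := htail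
      have eq_start : ∀ x ∈ (p.cons h).support, x ∈ F i → x = u := fun x hx hxi =>
        (List.mem_cons.1 hx).resolve_right fun hxp => hpi x hxp hxi
      obtain ⟨x, hx, hxi⟩ := hp i hi
      exact ⟨i, hi, u, eq_start x hx hxi ▸ hxi, p.cons h, SimpleGraph.Walk.isSubwalk_rfl _, hp,
        eq_start⟩

theorem exists_isPath_meeting_outer_only_at_ends {V ι : Type*} {G : SimpleGraph V}
    {F : ι → Set V} {s : Set ι} (hs : s.Nonempty) {u v : V} {p : G.Walk u v}
    (hp : p.IsPath) (hmeets : ∀ i ∈ s, ∃ x ∈ p.support, x ∈ F i) :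
    ∃ i ∈ s, ∃ j ∈ s, ∃ a ∈ F i, ∃ b ∈ F j, ∃ q : G.Walk a b, q.IsPath ∧
      (∀ k ∈ s, ∃ x ∈ q.support, x ∈ F k) ∧
      (∀ x ∈ q.support, x ∈ F i → x = a) ∧ ∀ x ∈ q.support, x ∈ F j → x = b := by
  obtain ⟨j, hj, b, hb, q, hqp, hqmeets, hqb⟩ :=
    exists_isSubwalk_meeting_first_only_at_start hs p hmeets
  obtain ⟨i, hi, a, ha, r, hrq, hrmeets, hra⟩ :=
    exists_isSubwalk_meeting_first_only_at_start hs q.reverse (by simpa using hqmeets)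
  have hr : r.IsPath :=
    SimpleGraph.Walk.isPath_of_isSubwalk hrq (SimpleGraph.Walk.isPath_of_isSubwalk hqp hp).reverse
  have hrb : ∀ x ∈ r.support, x ∈ F j → x = b := fun x hx =>
    hqb x (by simpa using hrq.support_subset hx)
  exact ⟨i, hi, j, hj, a, ha, b, hb, r, hr, hrmeets, hra, hrb⟩

section Tree

variable {W ι : Type} {T : SimpleGraph W} {F : ι → Set W}

theorem Asteroidal.index_eq_of_mem (hF : Asteroidal T F) {i j : ι} {x : W} (hi : x ∈ F i)
    (hj : x ∈ F j) : i = j :=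
  by_contra fun hij => Set.eq_empty_iff_forall_notMem.1 (hF.1 i j hij) x ⟨hi, hj⟩

theorem Asteroidal.index_eq_or_eq_or_eq_of_isPath (hF : Asteroidal T F) {u v : W} {p : T.Walk u v}
    (hp : p.IsPath) {i j k : ι} (hi : ∃ x ∈ p.support, x ∈ F i) (hj : ∃ x ∈ p.support, x ∈ F j)
    (hk : ∃ x ∈ p.support, x ∈ F k) : i = j ∨ i = k ∨ j = k := by
  by_contra! hijk
  obtain ⟨a, ha, b, hb, x, hx, y, hy, q, hq, hmeets, hqa, hqb⟩ :=
    exists_isPath_meeting_outer_only_at_ends (s := {i, j, k}) (Set.insert_nonempty _ _) hp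
      (by simpa using ⟨hi, hj, hk⟩)
  obtain ⟨c, hc, hac, hbc⟩ : ∃ c ∈ ({i, j, k} : Set ι), a ≠ c ∧ b ≠ c := by
    by_contra! hcover
    have hi := hcover i (by simp)
    have hj := hcover j (by simp)
    have hk := hcover k (by simp)
    grind
  obtain ⟨z, hz, hzc⟩ := hmeets c hc
  have hab : a ≠ b := by
    rintro rfl
    obtain rfl : x = y := hqb x q.start_mem_support hx
    have hsupport : q.support = [x] :=
      SimpleGraph.Walk.nil_iff_support_eq.1 (SimpleGraph.Walk.isPath_iff_nil.1 hq)
    obtain rfl : z = x := by simpa [hsupport] using hz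
    exact hac (hF.index_eq_of_mem hx hzc)
  exact hF.2 a b c hab hac hbc ⟨hF.1 a b hab, x, y, q, hx, hy, hq, hqa, hqb, z, hzc, hz⟩

theorem exists_adj_isPath_cons_of_notMem_treeLeaves (hT : T.IsAcyclic) {x y : W}
    {p : T.Walk x y} (hp : p.IsPath) (hnil : ¬ p.Nil) (hx : x ∉ treeLeaves T) :
    ∃ (w : W) (h : T.Adj w x), (p.cons h).IsPath := by
  obtain ⟨w, hxw, hw⟩ : ∃ w, T.Adj x w ∧ w ≠ p.snd := by
    by_contra! hsnd
    have hneighbors : T.neighborSet x = {p.snd} :=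
      Set.eq_singleton_iff_unique_mem.2 ⟨p.adj_snd hnil, hsnd⟩
    exact hx (Set.ncard_eq_one.2 ⟨_, hneighbors⟩)
  exact ⟨w, hxw.symm, hp.cons fun hwp => hw (hT.eq_snd_of_adj_start hp hxw hwp)⟩

theorem exists_treeLeaf_isPath_append [Finite W] (hT : T.IsAcyclic) {x y : W}
    {p : T.Walk x y} (hp : p.IsPath) (hnil : ¬ p.Nil) :
    ∃ l ∈ treeLeaves T, ∃ q : T.Walk l x, (q.append p).IsPath := by
  by_cases hx : x ∈ treeLeaves T
  · exact ⟨x, hx, .nil, hp⟩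
  · obtain ⟨w, hwx, hwp⟩ := exists_adj_isPath_cons_of_notMem_treeLeaves hT hp hnil hx
    obtain ⟨l, hl, q, hq⟩ := exists_treeLeaf_isPath_append hT hwp SimpleGraph.Walk.not_nil_cons
    exact ⟨l, hl, q.concat hwx, by rwa [SimpleGraph.Walk.concat_append]⟩
termination_by Nat.card W - p.length
decreasing_by
  have := Fintype.ofFinite W
  have := hp.length_lt
  rw [SimpleGraph.Walk.length_cons, Nat.card_eq_fintype_card]
  omega

theorem InGeneralPosition.exists_treeLeaf_forall_isPath_mem_iff [Finite W] {A : Set W}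
    (hA : InGeneralPosition T A) (hT : T.IsTree) (hAnt : A.Nontrivial) {a r : W} (ha : a ∈ A)
    (hr : r ∈ A) :
    ∃ l ∈ treeLeaves T, ∀ p : T.Walk l r, p.IsPath → ∀ b ∈ A, b ∈ p.support ↔ b = a ∨ b = r := by
  rcases eq_or_ne a r with rfl | har
  · obtain ⟨c, hc, hca⟩ := hAnt.exists_ne a
    obtain ⟨p, hp⟩ := hT.connected.exists_isPath a c
    obtain ⟨l, hl, q, hqp⟩ := exists_treeLeaf_isPath_append hT.isAcyclic hp
      (mt hp.nil_iff_eq.1 hca.symm)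
    refine ⟨l, hl, fun q' hq' b hb => ?_⟩
    obtain rfl : q' = q := (hT.existsUnique_path l a).unique hq' hqp.of_append_left
    refine ⟨fun hbq => .inl ?_, ?_⟩
    · have hbc : b ≠ c := hqp.ne_of_mem_support_of_append hca hbq p.end_mem_support
      exact (hA _ hqp hb ha hc (by simp [hbq]) (by simp) (by simp)).resolve_right
        (not_or.2 ⟨hbc, hca.symm⟩)
    · rintro (rfl | rfl) <;> simp
  · obtain ⟨p, hp⟩ := hT.connected.exists_isPath a r
    obtain ⟨l, hl, q, hqp⟩ := exists_treeLeaf_isPath_append hT.isAcyclic hp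
      (mt hp.nil_iff_eq.1 har)
    refine ⟨l, hl, fun q' hq' b hb => ?_⟩
    obtain rfl : q' = q.append p := (hT.existsUnique_path l r).unique hq' hqp
    refine ⟨fun hbqp => ?_, ?_⟩
    · exact (hA _ hqp hb ha hr hbqp (by simp) (by simp)).imp_right (·.resolve_right har)
    · rintro (rfl | rfl) <;> simp

theorem InGeneralPosition.ncard_le_ncard_treeLeaves [Finite W] {A : Set W}
    (hA : InGeneralPosition T A) (hT : T.IsTree) (hAnt : A.Nontrivial) :
    A.ncard ≤ (treeLeaves T).ncard := by
  obtain ⟨r, hr⟩ := hAnt.nonempty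
  have hleaf (a : W) (ha : a ∈ A) := hA.exists_treeLeaf_forall_isPath_mem_iff hT hAnt ha hr
  choose! leaf hleaf hmem using hleaf
  refine Set.ncard_le_ncard_of_injOn leaf hleaf fun a ha b hb hab => ?_
  obtain ⟨p, hp⟩ := hT.connected.exists_isPath (leaf a) r
  have hpa := hmem a ha p hp
  have hpb := hmem b hb
  rw [← hab] at hpb
  rcases (hpa b hb).1 ((hpb p hp b hb).2 (.inl rfl)) with hba | rfl
  · exact hba.symm
  · exact ((hpb p hp a ha).1 ((hpa a ha).2 (.inl rfl))).elim id id

theorem Asteroidal.inGeneralPosition_range (hF : Asteroidal T F) {f : ι → W}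
    (hf : ∀ i, f i ∈ F i) : InGeneralPosition T (Set.range f) := by
  rintro u v p hp _ _ _ ⟨i, rfl⟩ ⟨j, rfl⟩ ⟨k, rfl⟩ hi hj hk
  exact (hF.index_eq_or_eq_or_eq_of_isPath hp ⟨_, hi, hf i⟩ ⟨_, hj, hf j⟩ ⟨_, hk, hf k⟩).imp
    (congrArg f) (.imp (congrArg f) (congrArg f))

end Tree

theorem stmt_1_general {W ι : Type} [Finite W] [Nontrivial ι] {T : SimpleGraph W} (hT : T.IsTree)
    {F : ι → Set W} (hne : ∀ i, (F i).Nonempty) (hF : Asteroidal T F) :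
    Nat.card ι ≤ (treeLeaves T).ncard := by
  choose f hf using hne
  have hinj : Function.Injective f := fun i j hij => hF.index_eq_of_mem (hf i) (hij ▸ hf j)
  calc Nat.card ι = (Set.range f).ncard := (Set.ncard_range_of_injective hinj).symm
    _ ≤ (treeLeaves T).ncard := (hF.inGeneralPosition_range hf).ncard_le_ncard_treeLeaves hT
        (Set.image_univ ▸ Set.nontrivial_univ.image hinj)

/-- If `F 1, …, F n` (with `n ≥ 2`) is an asteroidal collection of
subtrees of a finite tree `T`, then `T` has at least `n` leaves. -/
theorem stmt_1 {W : Type} [Fintype W] (T : SimpleGraph W) (hT : T.IsTree)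
    (n : ℕ) (hn : 2 ≤ n) (F : Fin n → Set W)
    (hsub : ∀ i, (T.induce (F i)).Connected)
    (hast : Asteroidal T F) :
    n ≤ (treeLeaves T).ncard := by
  have : Nontrivial (Fin n) := Fin.nontrivial_iff_two_le.2 hn
  simpa using stmt_1_general hT (fun i => Set.nonempty_coe_sort.1 (hsub i).nonempty) hast
end

section
/- Let D be a digraph with a subtree representation in a host tree T. If vertices v and w of D have a common successor u that is not a successor of z (i.e., (v,u), (w,u) ∈ E(D) and (z,u) ∉ E(D)), then the source subtree S_z is not between S_v and S_w in T. Similarly, if v and w have a common predecessor u that is not a predecessor of z (i.e., (u,v), (u,w) ∈ E(D) and (u,z) ∉ E(D)), then the sink subtree T_z is not between T_v and T_w in T. -/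
/-!
Let `U` be a subtree meeting `A` and `B`, and let `p` be the path joining `A` to `B`. Extending `p`
inside `A` and inside `B` to vertices of `A ∩ U` and `B ∩ U` gives a path again, because `p` meets
`A` and `B` only at its ends and `A`, `B` are disjoint. Subtrees are convex, so `U` contains this
longer path and hence `p`; thus `U` meets every set between `A` and `B`. For `A = S_v`, `B = S_w`,
`U = T_u`, a vertex `z` with `S_z` between `S_v` and `S_w` would therefore be a predecessor of `u`.
-/

section Paths

variable {V : Type*} {G : SimpleGraph V}

theorem exists_isPath_support_subset_of_preconnected_induce {A : Set V}
    (hA : (G.induce A).Preconnected) {a b : V} (ha : a ∈ A) (hb : b ∈ A) :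
    ∃ p : G.Walk a b, p.IsPath ∧ ∀ x ∈ p.support, x ∈ A := by
  obtain ⟨q, hq⟩ := hA.exists_isPath ⟨a, ha⟩ ⟨b, hb⟩
  let ι : G.induce A →g G := (SimpleGraph.Embedding.induce A).toHom
  have hqA : ∀ x ∈ (q.map ι).support, x ∈ A := fun x hx => by
    rw [SimpleGraph.Walk.support_map] at hx
    obtain ⟨y, -, rfl⟩ := List.mem_map.1 hx
    exact y.2
  exact ⟨q.map ι, hq.map Subtype.val_injective, hqA⟩

theorem isPath_append_of_forall_mem_support_eq {a b c : V} {p : G.Walk a b} {q : G.Walk b c}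
    (hp : p.IsPath) (hq : q.IsPath) (h : ∀ x ∈ p.support, x ∈ q.support → x = b) :
    (p.append q).IsPath := by
  rw [SimpleGraph.Walk.isPath_def, SimpleGraph.Walk.support_append, List.nodup_append']
  refine ⟨hp.support_nodup, hq.support_nodup.tail, fun x hxp hxq => ?_⟩
  obtain rfl : x = b := h x hxp (List.mem_of_mem_tail hxq)
  have hnodup : (x :: q.support.tail).Nodup := q.cons_tail_support ▸ hq.support_nodup
  exact hnodup.notMem hxq

theorem mem_of_mem_support_of_isAcyclic (hG : G.IsAcyclic) {U : Set V}
    (hU : (G.induce U).Preconnected) {a b : V} (ha : a ∈ U) (hb : b ∈ U) {p : G.Walk a b}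
    (hp : p.IsPath) {x : V} (hx : x ∈ p.support) : x ∈ U := by
  obtain ⟨q, hq, hqU⟩ := exists_isPath_support_subset_of_preconnected_induce hU ha hb
  obtain rfl : p = q := congrArg Subtype.val ((hG.subsingleton_path a b).elim ⟨p, hp⟩ ⟨q, hq⟩)
  exact hqU x hx

end Paths

namespace Between

variable {W : Type} {T : SimpleGraph W} {A B C U : Set W}

theorem exists_isPath_through (h : Between T A B C) (hA : (T.induce A).Preconnected)
    (hB : (T.induce B).Preconnected) {a b : W} (ha : a ∈ A) (hb : b ∈ B) :
    ∃ p : T.Walk a b, p.IsPath ∧ ∃ x ∈ C, x ∈ p.support := by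
  obtain ⟨hAB, a₀, b₀, p, ha₀, hb₀, hp, hpA, hpB, x, hxC, hxp⟩ := h
  obtain ⟨q, hq, hqA⟩ := exists_isPath_support_subset_of_preconnected_induce hA ha ha₀
  obtain ⟨r, hr, hrB⟩ := exists_isPath_support_subset_of_preconnected_induce hB hb₀ hb
  have hpr : (p.append r).IsPath :=
    isPath_append_of_forall_mem_support_eq hp hr fun y hyp hyr => hpB y hyp (hrB y hyr)
  have hqr : ∀ y ∈ q.support, y ∉ r.support := fun y hyq hyr =>
    Set.eq_empty_iff_forall_notMem.1 hAB y ⟨hqA y hyq, hrB y hyr⟩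
  have hqpr : (q.append (p.append r)).IsPath := by
    refine isPath_append_of_forall_mem_support_eq hq hpr fun y hyq hy => ?_
    rcases (SimpleGraph.Walk.mem_support_append_iff p r).1 hy with hyp | hyr
    · exact hpA y hyp (hqA y hyq)
    · exact absurd hyr (hqr y hyq)
  exact ⟨_, hqpr, x, hxC, by simp [SimpleGraph.Walk.mem_support_append_iff, hxp]⟩

theorem inter_nonempty (h : Between T A B C) (hT : T.IsAcyclic)
    (hA : (T.induce A).Preconnected) (hB : (T.induce B).Preconnected)
    (hU : (T.induce U).Preconnected) (hAU : (A ∩ U).Nonempty) (hBU : (B ∩ U).Nonempty) :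
    (C ∩ U).Nonempty := by
  obtain ⟨a, haA, haU⟩ := hAU
  obtain ⟨b, hbB, hbU⟩ := hBU
  obtain ⟨p, hp, x, hxC, hxp⟩ := h.exists_isPath_through hA hB haA hbB
  exact ⟨x, hxC, mem_of_mem_support_of_isAcyclic hT hU haU hbU hp hxp⟩

end Between

namespace SubtreeRep

variable {V W : Type} {E : V → V → Prop} {T : SimpleGraph W}

/-- The dual representation: exchanging source and sink sets represents the reversed digraph, so
that statements about sources and successors yield those about sinks and predecessors. -/
def reverse (R : SubtreeRep E T) : SubtreeRep (flip E) T where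
  src := R.snk
  snk := R.src
  src_connected := R.snk_connected
  snk_connected := R.src_connected
  rep u v := by rw [Set.inter_comm]; exact R.rep v u

theorem not_between_src (R : SubtreeRep E T) (hT : T.IsAcyclic) {u v w z : V}
    (hvu : E v u) (hwu : E w u) (hzu : ¬ E z u) :
    ¬ Between T (R.src v) (R.src w) (R.src z) := fun h =>
  hzu <| (R.rep z u).2 <| h.inter_nonempty hT (R.src_connected v).preconnected
    (R.src_connected w).preconnected (R.snk_connected u).preconnected
    ((R.rep v u).1 hvu) ((R.rep w u).1 hwu)

end SubtreeRep

theorem stmt_2_general {V W : Type} (E : V → V → Prop)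
    (T : SimpleGraph W) (hT : T.IsAcyclic) (R : SubtreeRep E T) :
    (∀ u v w z : V, E v u → E w u → ¬ E z u →
      ¬ Between T (R.src v) (R.src w) (R.src z)) ∧
    (∀ u v w z : V, E u v → E u w → ¬ E u z →
      ¬ Between T (R.snk v) (R.snk w) (R.snk z)) :=
  ⟨fun _ _ _ _ => R.not_between_src hT, fun _ _ _ _ => R.reverse.not_between_src hT⟩

/-- In any subtree representation of a digraph in a host tree, if `v, w`
have a common successor `u` that is not a successor of `z`, then `S_z` is not between
`S_v` and `S_w`; similarly if `v, w` have a common predecessor `u` that is not a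
predecessor of `z`, then `T_z` is not between `T_v` and `T_w`. -/
theorem stmt_2 {V W : Type} [Fintype W] (E : V → V → Prop)
    (T : SimpleGraph W) (hT : T.IsTree) (R : SubtreeRep E T) :
    (∀ u v w z : V, E v u → E w u → ¬ E z u →
      ¬ Between T (R.src v) (R.src w) (R.src z)) ∧
    (∀ u v w z : V, E u v → E u w → ¬ E u z →
      ¬ Between T (R.snk v) (R.snk w) (R.snk z)) :=
  stmt_2_general E T hT.isAcyclic R
end

section
/- Let D be a digraph on a nonempty finite vertex set V with a subtree representation in which the source subtrees {S_v} are pairwise intersecting and the sink subtrees {T_v} are pairwise intersecting. Then either there exists u ∈ V with (u,v) ∈ E(D) for all v ∈ V (a row of 1's in the adjacency matrix) or there exists v ∈ V with (u,v) ∉ E(D) for all u ∈ V (a column of 0's); and similarly either there exists v ∈ V with (u,v) ∈ E(D) for all u ∈ V (a column of 1's) or there exists u ∈ V with (u,v) ∉ E(D) for all v ∈ V (a row of 0's). -/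
/-!
Two adjacent vertices in the union of two intersecting subtrees lie in a common one of them.
Suppose subtrees `A`, `A'`, `B'`, `B` of a forest intersect cyclically, with `a ∈ A ∩ A'` and
`b ∈ B ∩ B'`. The path from `a` to `b` stays in both `A ∪ B` and `A' ∪ B'`, so if `A` missed `B'`
and `A'` missed `B`, it could never leave `A ∩ A'`. Applied to two sources and two sinks, this
forbids a `2 × 2` permutation submatrix, so the rows of the adjacency matrix form a chain under
inclusion. Its greatest row is full or misses a column that is empty, and its least row is empty
or contains a column that is full.
-/

section Subtree

variable {W : Type*} {T : SimpleGraph W}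

theorem exists_isPath_support_subset_of_preconnected {S : Set W}
    (hS : (T.induce S).Preconnected) {a b : W} (ha : a ∈ S) (hb : b ∈ S) :
    ∃ p : T.Walk a b, p.IsPath ∧ ∀ x ∈ p.support, x ∈ S := by
  obtain ⟨p, hp⟩ := hS.exists_isPath ⟨a, ha⟩ ⟨b, hb⟩
  refine ⟨p.map (SimpleGraph.Embedding.induce S).toHom, hp.map Subtype.val_injective,
    fun x hx => ?_⟩
  obtain ⟨y, -, rfl⟩ := List.mem_map.mp (p.support_map _ ▸ hx)
  exact y.property

theorem support_subset_of_isPath_of_isAcyclic (hT : T.IsAcyclic) {S : Set W}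
    (hS : (T.induce S).Preconnected) {a b : W} (ha : a ∈ S) (hb : b ∈ S)
    {p : T.Walk a b} (hp : p.IsPath) : ∀ x ∈ p.support, x ∈ S := by
  obtain ⟨q, hq, hqS⟩ := exists_isPath_support_subset_of_preconnected hS ha hb
  have hpq : p = q := congrArg Subtype.val ((hT.subsingleton_path a b).elim ⟨p, hp⟩ ⟨q, hq⟩)
  exact hpq ▸ hqS

theorem mem_or_mem_of_adj_of_isAcyclic (hT : T.IsAcyclic) {S S' : Set W}
    (hS : (T.induce S).Preconnected) (hS' : (T.induce S').Preconnected)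
    (hSS' : (S ∩ S').Nonempty) {x y : W} (hx : x ∈ S) (hy : y ∈ S') (hxy : T.Adj x y) :
    y ∈ S ∨ x ∈ S' := by
  obtain ⟨c, hcS, hcS'⟩ := hSS'
  obtain ⟨p, hp, hpS⟩ := exists_isPath_support_subset_of_preconnected hS hcS hx
  obtain ⟨q, hq, hqS'⟩ := exists_isPath_support_subset_of_preconnected hS' hcS' hy
  by_cases hyp : y ∈ p.support
  · exact Or.inl (hpS y hyp)
  · exact Or.inr (hqS' x
      (hT.mem_support_of_ne_mem_support_of_adj_of_isPath hq hp hxy.symm hyp))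

theorem inter_nonempty_or_inter_nonempty_of_four_cycle (hT : T.IsAcyclic) {A A' B B' : Set W}
    (hA : (T.induce A).Preconnected) (hA' : (T.induce A').Preconnected)
    (hB : (T.induce B).Preconnected) (hB' : (T.induce B').Preconnected)
    (hAA' : (A ∩ A').Nonempty) (hBB' : (B ∩ B').Nonempty)
    (hAB : (A ∩ B).Nonempty) (hA'B' : (A' ∩ B').Nonempty) :
    (A ∩ B').Nonempty ∨ (A' ∩ B).Nonempty := by
  by_contra! h
  have hAB' : ∀ x ∈ A, x ∉ B' := fun x hx hx' => h.1.le ⟨hx, hx'⟩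
  have hA'B : ∀ x ∈ A', x ∉ B := fun x hx hx' => h.2.le ⟨hx, hx'⟩
  obtain ⟨a, haA, haA'⟩ := hAA'
  obtain ⟨b, hbB, hbB'⟩ := hBB'
  obtain ⟨p, hp, hpAB⟩ := exists_isPath_support_subset_of_preconnected
    (SimpleGraph.induce_union_connected hA hB hAB).preconnected (Or.inl haA) (Or.inr hbB)
  have hpA'B' : ∀ x ∈ p.support, x ∈ A' ∪ B' := support_subset_of_isPath_of_isAcyclic hT
    (SimpleGraph.induce_union_connected hA' hB' hA'B').preconnected (Or.inl haA') (Or.inr hbB') hp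
  obtain ⟨d, hd, ⟨hdA, hdA'⟩, hd_notMem⟩ :=
    p.exists_boundary_dart (A ∩ A') ⟨haA, haA'⟩ fun hb => hAB' b hb.1 hbB'
  have hd_snd : d.snd ∈ p.support := p.dart_snd_mem_support_of_mem_darts hd
  have hd_snd_A : d.snd ∈ A := (hpAB _ hd_snd).elim id fun hdB =>
    (mem_or_mem_of_adj_of_isAcyclic hT hA hB hAB hdA hdB d.adj).resolve_right (hA'B _ hdA')
  have hd_snd_A' : d.snd ∈ A' := (hpA'B' _ hd_snd).elim id fun hdB' =>
    (mem_or_mem_of_adj_of_isAcyclic hT hA' hB' hA'B' hdA' hdB' d.adj).resolve_right (hAB' _ hdA)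
  exact hd_notMem ⟨hd_snd_A, hd_snd_A'⟩

end Subtree

namespace IsFerrers

variable {V : Type} [Nonempty V] {F : V → V → Prop}

theorem exists_greatest_row (hF : IsFerrers F) (hfin : (Set.range F).Finite) :
    ∃ u, ∀ w, F w ≤ F u := by
  obtain ⟨_, ⟨u, rfl⟩, hu⟩ := hfin.exists_maximal (Set.range_nonempty F)
  exact ⟨u, fun w => (hF w u).elim id fun huw => hu ⟨w, rfl⟩ huw⟩

theorem exists_least_row (hF : IsFerrers F) (hfin : (Set.range F).Finite) :
    ∃ u, ∀ w, F u ≤ F w := by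
  obtain ⟨_, ⟨u, rfl⟩, hu⟩ := hfin.exists_minimal (Set.range_nonempty F)
  exact ⟨u, fun w => (hF u w).elim id fun hwu => hu ⟨w, rfl⟩ hwu⟩

theorem exists_full_row_or_empty_column (hF : IsFerrers F) (hfin : (Set.range F).Finite) :
    (∃ u, ∀ v, F u v) ∨ (∃ v, ∀ u, ¬ F u v) := by
  obtain ⟨u, hu⟩ := hF.exists_greatest_row hfin
  by_cases hfull : ∀ v, F u v
  · exact Or.inl ⟨u, hfull⟩
  · obtain ⟨v, huv⟩ := not_forall.mp hfull
    exact Or.inr ⟨v, fun w hwv => huv (hu w v hwv)⟩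

theorem exists_full_column_or_empty_row (hF : IsFerrers F) (hfin : (Set.range F).Finite) :
    (∃ v, ∀ u, F u v) ∨ (∃ u, ∀ v, ¬ F u v) := by
  obtain ⟨u, hu⟩ := hF.exists_least_row hfin
  by_cases hempty : ∀ v, ¬ F u v
  · exact Or.inr ⟨u, hempty⟩
  · obtain ⟨v, huv⟩ := not_forall_not.mp hempty
    exact Or.inl ⟨v, fun w => hu w v huv⟩

end IsFerrers

section SubtreeRep

variable {V W : Type} {E : V → V → Prop} {T : SimpleGraph W}

theorem SubtreeRep.isFerrers (R : SubtreeRep E T) (hT : T.IsAcyclic)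
    (hsrc : ∀ u v, (R.src u ∩ R.src v).Nonempty) (hsnk : ∀ u v, (R.snk u ∩ R.snk v).Nonempty) :
    IsFerrers E := by
  intro u u'
  by_contra! h
  obtain ⟨v, huv, hu'v⟩ := Set.not_subset.mp h.1
  obtain ⟨v', hu'v', huv'⟩ := Set.not_subset.mp h.2
  rcases inter_nonempty_or_inter_nonempty_of_four_cycle hT
    (R.src_connected u).preconnected (R.src_connected u').preconnected
    (R.snk_connected v).preconnected (R.snk_connected v').preconnected
    (hsrc u u') (hsnk v v') ((R.rep u v).mp huv) ((R.rep u' v').mp hu'v') with hmeet | hmeet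
  · exact huv' ((R.rep u v').mpr hmeet)
  · exact hu'v ((R.rep u' v).mpr hmeet)

theorem stmt_3_general [Nonempty V] (hE : (Set.range E).Finite) (hT : T.IsAcyclic)
    (R : SubtreeRep E T) (hsrc : ∀ u v, (R.src u ∩ R.src v).Nonempty)
    (hsnk : ∀ u v, (R.snk u ∩ R.snk v).Nonempty) :
    ((∃ u, ∀ v, E u v) ∨ (∃ v, ∀ u, ¬ E u v)) ∧ ((∃ v, ∀ u, E u v) ∨ (∃ u, ∀ v, ¬ E u v)) :=
  have hF : IsFerrers E := R.isFerrers hT hsrc hsnk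
  ⟨hF.exists_full_row_or_empty_column hE, hF.exists_full_column_or_empty_row hE⟩

end SubtreeRep

/-- If in a subtree representation of a digraph on a nonempty finite
vertex set the source subtrees are pairwise intersecting and the sink subtrees are
pairwise intersecting, then the adjacency matrix has a row of 1's or a column of 0's,
and similarly a column of 1's or a row of 0's. -/
theorem stmt_3 {V W : Type} [Fintype V] [Nonempty V] [Fintype W]
    (E : V → V → Prop) (T : SimpleGraph W) (hT : T.IsTree)
    (R : SubtreeRep E T)
    (hsrc : ∀ u v : V, (R.src u ∩ R.src v).Nonempty)
    (hsnk : ∀ u v : V, (R.snk u ∩ R.snk v).Nonempty) :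
    ((∃ u : V, ∀ v : V, E u v) ∨ (∃ v : V, ∀ u : V, ¬ E u v)) ∧
    ((∃ v : V, ∀ u : V, E u v) ∨ (∃ u : V, ∀ v : V, ¬ E u v)) :=
  stmt_3_general (Set.finite_range E) hT.isAcyclic R hsrc hsnk
end

section
/- For n ≥ 3, let D_n be the digraph on vertices {1, …, n} with (i,j) ∈ E(D_n) if and only if i ≠ j (adjacency matrix J − I). In every subtree representation of D_n, either the source subtrees {S_i} have a common vertex and the sink subtrees {T_i} form an asteroidal collection, or the sink subtrees {T_i} have a common vertex and the source subtrees {S_i} form an asteroidal collection. -/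
/-!
Write `S i` and `K i` for the source and sink subtrees, so that `S i` meets `K j` exactly when
`i ≠ j`. Intersection graphs of subtrees are chordal. The cycle `S i, S j, K i, K j` forces one of
the pairs `S i, S j` and `K i, K j` to be disjoint, and the cycle `S i, K j, S k, K i, S j, K k`
forces `S i` to meet `S k` or `K j` to meet `K k`. Hence disjointness of two sinks spreads to all
pairs of sinks, and likewise for sources, so one of the two families is pairwise disjoint.

If the sinks are pairwise disjoint, a path from `K i` to `K j` stays in `S l ∪ K i ∪ K j` for every
`l` other than `i` and `j`, and so it avoids `K l`: the sinks are asteroidal. For three indices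
`i, j, k`, the median of a vertex of `K i`, one of `K j` and one of `K k` then avoids all three
sinks, and it lies in every `S l` because `l` differs from two of `i, j, k`.
-/

section Subtree

variable {W : Type*} {T : SimpleGraph W} {A B C D : Set W}

theorem exists_isPath_support_subset {a b : W} (hA : (T.induce A).Connected) (ha : a ∈ A)
    (hb : b ∈ A) : ∃ p : T.Walk a b, p.IsPath ∧ ∀ x ∈ p.support, x ∈ A := by
  obtain ⟨q, hq⟩ := hA.exists_isPath ⟨a, ha⟩ ⟨b, hb⟩
  let ι := SimpleGraph.Embedding.induce (G := T) A
  refine ⟨q.map ι.toHom, hq.map ι.injective, fun x hx => ?_⟩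
  obtain ⟨y, -, rfl⟩ := List.mem_map.1 (q.support_map ι.toHom ▸ hx)
  exact y.2

theorem support_subset_of_induce_connected (hT : T.IsAcyclic) (hA : (T.induce A).Connected)
    {a b x : W} {p : T.Walk a b} (hp : p.IsPath) (ha : a ∈ A) (hb : b ∈ A)
    (hx : x ∈ p.support) : x ∈ A := by
  obtain ⟨q, hq, hqA⟩ := exists_isPath_support_subset hA ha hb
  have hpq : p = q := congrArg Subtype.val ((hT.subsingleton_path a b).elim ⟨p, hp⟩ ⟨q, hq⟩)
  exact hqA x (hpq ▸ hx)

theorem mem_of_adj_of_notMem (hT : T.IsAcyclic) (hA : (T.induce A).Connected)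
    (hC : (T.induce C).Connected) (hAC : (A ∩ C).Nonempty) {u v : W} (huv : T.Adj u v)
    (hu : u ∈ A) (hvA : v ∉ A) (hvC : v ∈ C) : u ∈ C := by
  obtain ⟨z, hzA, hzC⟩ := hAC
  obtain ⟨q, hq, hqA⟩ := exists_isPath_support_subset hA hzA hu
  have hqv : (q.concat huv).IsPath := hq.concat (fun hv => hvA (hqA v hv)) huv
  exact support_subset_of_induce_connected hT hC hqv hzC hvC
    (by simp [SimpleGraph.Walk.support_concat])

theorem helly_three (hT : T.IsAcyclic) (hA : (T.induce A).Connected)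
    (hB : (T.induce B).Connected) (hC : (T.induce C).Connected) (hAB : (A ∩ B).Nonempty)
    (hBC : (B ∩ C).Nonempty) (hAC : (A ∩ C).Nonempty) : ∃ x ∈ A, x ∈ B ∧ x ∈ C := by
  obtain ⟨x, hxA, hxB⟩ := hAB
  obtain ⟨y, hyB, hyC⟩ := hBC
  by_cases hyA : y ∈ A
  · exact ⟨y, hyA, hyB, hyC⟩
  obtain ⟨p, hp, hpB⟩ := exists_isPath_support_subset hB hxB hyB
  have hACconn : (T.induce (A ∪ C)).Connected :=
    T.induce_union_connected hA.preconnected hC.preconnected hAC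
  have hpAC : ∀ z ∈ p.support, z ∈ A ∪ C := fun z =>
    support_subset_of_induce_connected hT hACconn hp (.inl hxA) (.inr hyC)
  -- The path from `x` to `y` stays in `A ∪ C`, and the vertex at which it leaves `A` is common.
  obtain ⟨d, hd, hdA, hdA'⟩ := p.exists_boundary_dart A hxA hyA
  have hdC : d.snd ∈ C := (hpAC _ (p.dart_snd_mem_support_of_mem_darts hd)).resolve_left hdA'
  exact ⟨d.fst, hdA, hpB _ (p.dart_fst_mem_support_of_mem_darts hd),
    mem_of_adj_of_notMem hT hA hC hAC d.adj hdA hdA' hdC⟩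

theorem four_cycle_chord (hT : T.IsAcyclic) (hA : (T.induce A).Connected)
    (hB : (T.induce B).Connected) (hC : (T.induce C).Connected) (hD : (T.induce D).Connected)
    (hAB : (A ∩ B).Nonempty) (hBC : (B ∩ C).Nonempty) (hCD : (C ∩ D).Nonempty)
    (hAD : (A ∩ D).Nonempty) : (A ∩ C).Nonempty ∨ (B ∩ D).Nonempty := by
  obtain ⟨x, hxA, hxB, hxC | hxD⟩ := helly_three hT hA hB
    (T.induce_union_connected hC.preconnected hD.preconnected hCD) hAB
    (hBC.mono fun _ h => ⟨h.1, .inl h.2⟩) (hAD.mono fun _ h => ⟨h.1, .inr h.2⟩)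
  · exact .inl ⟨x, hxA, hxC⟩
  · exact .inr ⟨x, hxB, hxD⟩

theorem exists_mem_support_of_three_walks (hT : T.IsAcyclic) {a b c : W} (p : T.Walk a b)
    (q : T.Walk b c) (r : T.Walk a c) : ∃ m ∈ p.support, m ∈ q.support ∧ m ∈ r.support :=
  helly_three hT p.connected_induce_support q.connected_induce_support r.connected_induce_support
    ⟨b, p.end_mem_support, q.start_mem_support⟩ ⟨c, q.end_mem_support, r.end_mem_support⟩
    ⟨a, p.start_mem_support, r.start_mem_support⟩

end Subtree

namespace SubtreeRep

open scoped Function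

variable {V W : Type} {T : SimpleGraph W}

/-- Exchange of sources and sinks, which represents the reversed digraph; it is stated for a
symmetric relation so that the result represents the same digraph. -/
def swap {E : V → V → Prop} [Std.Symm E] (R : SubtreeRep E T) : SubtreeRep E T where
  src := R.snk
  snk := R.src
  src_connected := R.snk_connected
  snk_connected := R.src_connected
  rep u v := by rw [Set.inter_comm, ← R.rep, comm (r := E)]

variable (R : SubtreeRep (· ≠ · : V → V → Prop) T) {i j k : V}

theorem disjoint_src_snk (i : V) : Disjoint (R.src i) (R.snk i) :=
  Set.disjoint_iff_inter_eq_empty.2 <|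
    Set.not_nonempty_iff_eq_empty.1 fun h => (R.rep i i).2 h rfl

theorem src_inter_snk_nonempty (hij : i ≠ j) : (R.src i ∩ R.snk j).Nonempty :=
  (R.rep i j).1 hij

theorem induce_src_union_snk_connected (hij : i ≠ j) :
    (T.induce (R.src i ∪ R.snk j)).Connected :=
  T.induce_union_connected (R.src_connected i).preconnected (R.snk_connected j).preconnected
    (R.src_inter_snk_nonempty hij)

theorem disjoint_src_or_disjoint_snk (hT : T.IsAcyclic) (hij : i ≠ j) :
    Disjoint (R.src i) (R.src j) ∨ Disjoint (R.snk i) (R.snk j) := by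
  by_contra! ⟨hsrc, hsnk⟩
  rw [Set.not_disjoint_iff_nonempty_inter] at hsrc hsnk
  rcases four_cycle_chord hT (R.src_connected i) (R.src_connected j) (R.snk_connected i)
    (R.snk_connected j) hsrc (R.src_inter_snk_nonempty hij.symm) hsnk
    (R.src_inter_snk_nonempty hij) with h | h
  · exact h.not_disjoint (R.disjoint_src_snk i)
  · exact h.not_disjoint (R.disjoint_src_snk j)

theorem src_inter_src_or_snk_inter_snk_nonempty (hT : T.IsAcyclic) (hij : i ≠ j) (hik : i ≠ k)
    (hjk : j ≠ k) : (R.src i ∩ R.src k).Nonempty ∨ (R.snk j ∩ R.snk k).Nonempty := by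
  have hpath : (T.induce (R.src k ∪ R.snk i ∪ (R.src j ∪ R.snk k))).Connected :=
    T.induce_union_connected
      (R.induce_src_union_snk_connected hik.symm).preconnected
      (R.induce_src_union_snk_connected hjk).preconnected
      ((R.src_inter_snk_nonempty hij.symm).mono fun _ h => ⟨.inr h.2, .inl h.1⟩)
  obtain ⟨x, hxi, hxj, (hx | hx) | (hx | hx)⟩ :=
    helly_three hT (R.src_connected i) (R.snk_connected j) hpath
      (R.src_inter_snk_nonempty hij)
      ((R.src_inter_snk_nonempty hjk.symm).mono fun _ h => ⟨h.2, .inl (.inl h.1)⟩)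
      ((R.src_inter_snk_nonempty hik).mono fun _ h => ⟨h.1, .inr (.inr h.2)⟩)
  · exact .inl ⟨x, hxi, hx⟩
  · exact ((R.disjoint_src_snk i).notMem_of_mem_left hxi hx).elim
  · exact ((R.disjoint_src_snk j).notMem_of_mem_left hx hxj).elim
  · exact .inr ⟨x, hxj, hx⟩

theorem disjoint_snk_of_disjoint_snk (hT : T.IsAcyclic) (hij : i ≠ j) (hik : i ≠ k)
    (h : Disjoint (R.snk i) (R.snk j)) : Disjoint (R.snk i) (R.snk k) := by
  obtain rfl | hjk := eq_or_ne j k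
  · exact h
  have hsrc : (R.src k ∩ R.src i).Nonempty :=
    (R.src_inter_src_or_snk_inter_snk_nonempty hT hjk.symm hik.symm hij.symm).resolve_right
      fun hsnk => hsnk.not_disjoint h.symm
  exact ((R.disjoint_src_or_disjoint_snk hT hik.symm).resolve_left hsrc.not_disjoint).symm

theorem pairwise_disjoint_snk (hT : T.IsAcyclic) (hij : i ≠ j)
    (h : Disjoint (R.snk i) (R.snk j)) : Pairwise (Disjoint on R.snk) := by
  intro k l hkl
  obtain rfl | hki := eq_or_ne k i
  · exact R.disjoint_snk_of_disjoint_snk hT hij hkl h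
  · exact R.disjoint_snk_of_disjoint_snk hT hki hkl
      (R.disjoint_snk_of_disjoint_snk hT hij hki.symm h).symm

theorem pairwise_disjoint_snk_or_src (hT : T.IsAcyclic) :
    Pairwise (Disjoint on R.snk) ∨ Pairwise (Disjoint on R.src) := by
  obtain _ | _ := subsingleton_or_nontrivial V
  · exact .inl Subsingleton.pairwise
  obtain ⟨i, j, hij⟩ := exists_pair_ne V
  rcases R.disjoint_src_or_disjoint_snk hT hij with h | h
  · exact .inr (R.swap.pairwise_disjoint_snk hT hij h)
  · exact .inl (R.pairwise_disjoint_snk hT hij h)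

theorem induce_src_union_snk_union_snk_connected (hki : k ≠ i) (hkj : k ≠ j) :
    (T.induce (R.src k ∪ R.snk i ∪ R.snk j)).Connected :=
  T.induce_union_connected (R.induce_src_union_snk_connected hki).preconnected
    (R.snk_connected j).preconnected
    ((R.src_inter_snk_nonempty hkj).mono fun _ h => ⟨.inl h.1, h.2⟩)

theorem support_subset_src_union_snk_union_snk (hT : T.IsAcyclic) (hki : k ≠ i) (hkj : k ≠ j)
    {a b x : W} {p : T.Walk a b} (hp : p.IsPath) (ha : a ∈ R.snk i) (hb : b ∈ R.snk j)
    (hx : x ∈ p.support) : x ∈ R.src k ∪ R.snk i ∪ R.snk j :=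
  support_subset_of_induce_connected hT (R.induce_src_union_snk_union_snk_connected hki hkj) hp
    (.inl (.inr ha)) (.inr hb) hx

theorem notMem_snk_of_mem_support (hT : T.IsAcyclic) (hsnk : Pairwise (Disjoint on R.snk))
    (hki : k ≠ i) (hkj : k ≠ j) {a b x : W} {p : T.Walk a b} (hp : p.IsPath)
    (ha : a ∈ R.snk i) (hb : b ∈ R.snk j) (hx : x ∈ p.support) : x ∉ R.snk k := by
  rcases R.support_subset_src_union_snk_union_snk hT hki hkj hp ha hb hx with (h | h) | h
  · exact (R.disjoint_src_snk k).notMem_of_mem_left h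
  · exact (hsnk hki.symm).notMem_of_mem_left h
  · exact (hsnk hkj.symm).notMem_of_mem_left h

theorem mem_src_of_mem_support (hT : T.IsAcyclic) (hki : k ≠ i) (hkj : k ≠ j) {a b x : W}
    {p : T.Walk a b} (hp : p.IsPath) (ha : a ∈ R.snk i) (hb : b ∈ R.snk j) (hx : x ∈ p.support)
    (hxi : x ∉ R.snk i) (hxj : x ∉ R.snk j) : x ∈ R.src k :=
  ((R.support_subset_src_union_snk_union_snk hT hki hkj hp ha hb hx).resolve_right
    hxj).resolve_right hxi

theorem asteroidal_snk (hT : T.IsAcyclic) (hsnk : Pairwise (Disjoint on R.snk)) :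
    Asteroidal T R.snk := by
  refine ⟨fun i j hij => (hsnk hij).inter_eq, ?_⟩
  rintro i j k - hik hjk ⟨-, a, b, p, ha, hb, hp, -, -, x, hxk, hxp⟩
  exact R.notMem_snk_of_mem_support hT hsnk hik.symm hjk.symm hp ha hb hxp hxk

theorem exists_isPath_snk_snk (hki : k ≠ i) (hkj : k ≠ j) {a b : W} (ha : a ∈ R.snk i)
    (hb : b ∈ R.snk j) : ∃ p : T.Walk a b, p.IsPath :=
  (exists_isPath_support_subset (R.induce_src_union_snk_union_snk_connected hki hkj)
    (.inl (.inr ha)) (.inr hb)).imp fun _ hp => hp.1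

theorem exists_forall_mem_src_of_three (hT : T.IsAcyclic) (hij : i ≠ j) (hik : i ≠ k)
    (hjk : j ≠ k) (hsnk : Pairwise (Disjoint on R.snk)) : ∃ x, ∀ l, x ∈ R.src l := by
  obtain ⟨a, ha⟩ := (R.snk_connected i).nonempty
  obtain ⟨b, hb⟩ := (R.snk_connected j).nonempty
  obtain ⟨c, hc⟩ := (R.snk_connected k).nonempty
  obtain ⟨p, hp⟩ := R.exists_isPath_snk_snk hik.symm hjk.symm ha hb
  obtain ⟨q, hq⟩ := R.exists_isPath_snk_snk hij hik hb hc
  obtain ⟨r, hr⟩ := R.exists_isPath_snk_snk hij.symm hjk ha hc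
  obtain ⟨m, hmp, hmq, hmr⟩ := exists_mem_support_of_three_walks hT p q r
  have hmi : m ∉ R.snk i := R.notMem_snk_of_mem_support hT hsnk hij hik hq hb hc hmq
  have hmj : m ∉ R.snk j := R.notMem_snk_of_mem_support hT hsnk hij.symm hjk hr ha hc hmr
  have hmk : m ∉ R.snk k := R.notMem_snk_of_mem_support hT hsnk hik.symm hjk.symm hp ha hb hmp
  refine ⟨m, fun l => ?_⟩
  obtain rfl | hli := eq_or_ne l i
  · exact R.mem_src_of_mem_support hT hij hik hq hb hc hmq hmj hmk
  obtain rfl | hlj := eq_or_ne l j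
  · exact R.mem_src_of_mem_support hT hli hjk hr ha hc hmr hmi hmk
  · exact R.mem_src_of_mem_support hT hli hlj hp ha hb hmp hmi hmj

theorem exists_forall_mem_src (hT : T.IsAcyclic) (hV : 3 ≤ ENat.card V)
    (hsnk : Pairwise (Disjoint on R.snk)) : ∃ x, ∀ i, x ∈ R.src i := by
  have : Nontrivial V :=
    (ENat.one_lt_card_iff_nontrivial V).1 (lt_of_lt_of_le (by norm_num) hV)
  obtain ⟨i, j, hij⟩ := exists_pair_ne V
  obtain ⟨k, hki, hkj⟩ := ENat.exists_ne_ne_of_three_le hV i j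
  exact R.exists_forall_mem_src_of_three hT hij hki.symm hkj.symm hsnk

end SubtreeRep

theorem stmt_4_general {V W : Type} (hV : 3 ≤ ENat.card V) {T : SimpleGraph W}
    (hT : T.IsAcyclic) (R : SubtreeRep (· ≠ · : V → V → Prop) T) :
    ((∃ x, ∀ i, x ∈ R.src i) ∧ Asteroidal T R.snk) ∨
      ((∃ x, ∀ i, x ∈ R.snk i) ∧ Asteroidal T R.src) :=
  (R.pairwise_disjoint_snk_or_src hT).imp
    (fun h => ⟨R.exists_forall_mem_src hT hV h, R.asteroidal_snk hT h⟩)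
    (fun h => ⟨R.swap.exists_forall_mem_src hT hV h, R.swap.asteroidal_snk hT h⟩)

/-- For `n ≥ 3`, in every subtree representation of `D_n` (adjacency
matrix `J - I`) in a host tree, either the source subtrees have a common vertex and
the sink subtrees form an asteroidal collection, or vice versa. -/
theorem stmt_4 {W : Type} [Fintype W] (n : ℕ) (hn : 3 ≤ n)
    (T : SimpleGraph W) (hT : T.IsTree)
    (R : SubtreeRep (DnRel n) T) :
    ((∃ x : W, ∀ i : Fin n, x ∈ R.src i) ∧ Asteroidal T R.snk) ∨
    ((∃ x : W, ∀ i : Fin n, x ∈ R.snk i) ∧ Asteroidal T R.src) := by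
  exact stmt_4_general (by simpa using hn) hT.isAcyclic R
end

section
/- For n ≥ 3, the digraph D_n on vertices {1, …, n} with (i,j) ∈ E(D_n) if and only if i ≠ j (adjacency matrix J − I) has leafage l(D_n) = n. -/
/-!
Lower bound. For each `i` the disjoint subtrees `S i` and `T i` are separated by an edge of the
host tree; let `A i` be the side of that edge containing `S i`. Sides of tree edges never cross, and
no `A i` contains another `A j`, since `S j` meets `T i` outside `A i`. Hence any two of the `A i`
are disjoint or cover the tree. An antichain cannot mix the two kinds of pairs: if `A i` and `A j`
are disjoint while `A j` and `A k` cover, then `A i ⊆ A k`. So either the sides `A i` or their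
complements are pairwise disjoint, and each side of an edge contains a leaf of the host tree.

Upper bound. Every digraph is represented in the star with one leaf per vertex.
-/

section ConnectedSets

variable {W : Type*} {G : SimpleGraph W} {A B S T : Set W}

lemma connected_induce_insert (hA : (G.induce A).Preconnected) {x y : W} (hx : x ∈ A)
    (hxy : G.Adj x y) : (G.induce (insert y A)).Connected := by
  rw [← Set.union_singleton]
  exact SimpleGraph.connected_induce_union hA .of_subsingleton hx rfl hxy

lemma exists_adj_mem_notMem (hG : G.Preconnected) (hA : A.Nonempty) (hA' : Aᶜ.Nonempty) :
    ∃ x ∈ A, ∃ y ∉ A, G.Adj x y := by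
  obtain ⟨x, hx⟩ := hA
  obtain ⟨y, hy⟩ := hA'
  obtain ⟨p⟩ := hG x y
  obtain ⟨d, -, hfst, hsnd⟩ := p.exists_boundary_dart A hx hy
  exact ⟨d.fst, hfst, d.snd, hsnd, d.adj⟩

lemma exists_adj_mem_inter_mem_sdiff (hS : (G.induce S).Preconnected) (hSA : (S ∩ A).Nonempty)
    (hSA' : (S \ A).Nonempty) : ∃ x ∈ S ∩ A, ∃ y ∈ S \ A, G.Adj x y := by
  obtain ⟨u, huS, huA⟩ := hSA
  obtain ⟨v, hvS, hvA⟩ := hSA'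
  obtain ⟨x, hx, y, hy, hxy⟩ :=
    exists_adj_mem_notMem (A := Subtype.val ⁻¹' A) hS ⟨⟨u, huS⟩, huA⟩ ⟨⟨v, hvS⟩, hvA⟩
  exact ⟨x, ⟨x.2, hx⟩, y, ⟨y.2, hy⟩, hxy⟩

lemma connected_induce_of_boundary_subset (hG : G.Preconnected) (hT : (G.induce T).Connected)
    (hTB : T ⊆ B) (hB : ∀ x ∈ B, ∀ y ∉ B, G.Adj x y → x ∈ T) : (G.induce B).Connected := by
  obtain ⟨t, ht⟩ := hT.nonempty
  have reachable_of_mem {x : W} (hx : x ∈ T) :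
      (G.induce B).Reachable ⟨x, hTB hx⟩ ⟨t, hTB ht⟩ :=
    (hT.preconnected ⟨x, hx⟩ ⟨t, ht⟩).map (G.induceHomOfLE hTB).toHom
  have reachable_of_walk {x y : W} (p : G.Walk x y) (hy : y ∈ T) (hx : x ∈ B) :
      (G.induce B).Reachable ⟨x, hx⟩ ⟨t, hTB ht⟩ := by
    induction p with
    | nil => exact reachable_of_mem hy
    | @cons x z _ hxz _ ih =>
      by_cases hz : z ∈ B
      · have hadj : (G.induce B).Adj ⟨x, hx⟩ ⟨z, hz⟩ := hxz
        exact hadj.reachable.trans (ih hy hz)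
      · exact reachable_of_mem (hB x hx z hz hxz)
  refine (SimpleGraph.connected_iff_exists_forall_reachable _).2
    ⟨⟨t, hTB ht⟩, fun ⟨x, hx⟩ => ?_⟩
  obtain ⟨p⟩ := hG x t
  exact (reachable_of_walk p ht hx).symm

lemma induce_deleteEdges_singleton_of_notMem {e : Sym2 W} {v : W} (hve : v ∈ e) (hv : v ∉ A) :
    (G.deleteEdges {e}).induce A = G.induce A := by
  ext ⟨x, hx⟩ ⟨y, hy⟩
  have hne : s(x, y) ≠ e := by
    rintro rfl
    rcases Sym2.mem_iff.1 hve with rfl | rfl <;> contradiction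
  simp [hne]

end ConnectedSets

/-- `A` is one side of a bond of `G`: both `A` and its complement induce connected (in particular
nonempty) subgraphs. In a tree, these are the two sides of the removal of an edge. -/
structure IsBondSide {W : Type*} (G : SimpleGraph W) (A : Set W) : Prop where
  connected : (G.induce A).Connected
  connected_compl : (G.induce Aᶜ).Connected

namespace IsBondSide

variable {W : Type*} {G : SimpleGraph W} {A B S T : Set W}

lemma compl (hA : IsBondSide G A) : IsBondSide G Aᶜ :=
  ⟨hA.connected_compl, (compl_compl A).symm ▸ hA.connected⟩

theorem exists_separating (hG : G.Preconnected) (hS : (G.induce S).Connected)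
    (hT : (G.induce T).Connected) (hST : Disjoint S T) :
    ∃ A, IsBondSide G A ∧ S ⊆ A ∧ T ⊆ Aᶜ := by
  let F : Set (Set W) := {C | S ⊆ C ∧ Disjoint C T ∧ (G.induce C).Connected}
  have hSF : S ∈ F := ⟨subset_rfl, hST, hS⟩
  have hTF : T ⊆ (⋃₀ F)ᶜ :=
    Set.subset_compl_iff_disjoint_left.2 (Set.disjoint_sUnion_left.2 fun C hC => hC.2.1)
  have hF : (G.induce (⋃₀ F)).Connected := by
    obtain ⟨s, hs⟩ := hS.nonempty
    exact SimpleGraph.induce_sUnion_connected_of_pairwise_not_disjoint ⟨S, hSF⟩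
      (fun hC hC' => ⟨s, hC.1 hs, hC'.1 hs⟩) fun hC => hC.2.2
  refine ⟨⋃₀ F, ⟨hF, ?_⟩, Set.subset_sUnion_of_mem hSF, hTF⟩
  refine connected_induce_of_boundary_subset hG hT hTF fun x hx y hy hxy => ?_
  by_contra hxT
  have hinsert : insert x (⋃₀ F) ∈ F :=
    ⟨(Set.subset_sUnion_of_mem hSF).trans (Set.subset_insert _ _),
      Set.disjoint_insert_left.2 ⟨hxT, Set.subset_compl_iff_disjoint_left.1 hTF⟩,
      connected_induce_insert hF.preconnected (not_not.1 hy) hxy.symm⟩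
  exact hx ⟨_, hinsert, Set.mem_insert _ _⟩

theorem eq_and_eq_of_adj (hA : IsBondSide G A) (hG : G.IsAcyclic) {a b a' b' : W}
    (ha : a ∈ A) (hb : b ∉ A) (hab : G.Adj a b) (ha' : a' ∈ A) (hb' : b' ∉ A)
    (hab' : G.Adj a' b') : a = a' ∧ b = b' := by
  by_contra hne
  let H := G.deleteEdges {s(a, b)}
  have hHA : (H.induce A).Connected := by
    rw [induce_deleteEdges_singleton_of_notMem (Sym2.mem_mk_right a b) hb]
    exact hA.connected
  have hHA' : (H.induce Aᶜ).Connected := by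
    rw [induce_deleteEdges_singleton_of_notMem (Sym2.mem_mk_left a b) (not_not.2 ha)]
    exact hA.connected_compl
  have hHab' : H.Adj a' b' := by
    refine SimpleGraph.deleteEdges_adj.2 ⟨hab', fun h => ?_⟩
    rcases Sym2.eq_iff.1 h with ⟨rfl, rfl⟩ | ⟨rfl, rfl⟩
    · exact hne ⟨rfl, rfl⟩
    · exact hb ha'
  have hH := SimpleGraph.connected_induce_union hHA.preconnected hHA'.preconnected ha' hb' hHab'
  have hreach : H.Reachable a b := (hH.preconnected ⟨a, .inl ha⟩ ⟨b, .inr hb⟩).map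
    (SimpleGraph.Embedding.induce _).toHom
  exact SimpleGraph.isBridge_iff.1
    (SimpleGraph.isAcyclic_iff_forall_adj_isBridge.1 hG hab) hreach

theorem subset_or_subset_or_disjoint_or_codisjoint (hA : IsBondSide G A) (hB : IsBondSide G B)
    (hG : G.IsAcyclic) : A ⊆ B ∨ B ⊆ A ∨ Disjoint A B ∨ Codisjoint A B := by
  by_contra! h
  obtain ⟨hAB, hBA, hdisj, hcodisj⟩ := h
  have hAB' : (Aᶜ \ B).Nonempty := by
    rwa [codisjoint_iff_compl_le_right, ← Set.sdiff_nonempty] at hcodisj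
  obtain ⟨x, hx, y, hy, hxy⟩ := exists_adj_mem_inter_mem_sdiff hA.connected.preconnected
    (Set.not_disjoint_iff_nonempty_inter.1 hdisj) (Set.sdiff_nonempty.2 hAB)
  obtain ⟨x', hx', y', hy', hxy'⟩ := exists_adj_mem_inter_mem_sdiff
    hA.connected_compl.preconnected (Set.inter_comm B Aᶜ ▸ Set.sdiff_nonempty.2 hBA) hAB'
  have hxx' : x = x' := (hB.eq_and_eq_of_adj hG hx.2 hy.2 hxy hx'.2 hy'.2 hxy').1
  exact hx'.1 (hxx' ▸ hx.1)

end IsBondSide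

section Leaves

variable {W : Type} [Finite W] {G : SimpleGraph W}

theorem IsBondSide.exists_mem_treeLeaves {A : Set W} (hA : IsBondSide G A) (hG : G.IsTree) :
    ∃ x ∈ A, x ∈ treeLeaves G := by
  classical
  have := Fintype.ofFinite W
  obtain ⟨a, ha, b, hb, hab⟩ := exists_adj_mem_notMem hG.connected.preconnected
    (Set.nonempty_coe_sort.1 hA.connected.nonempty)
    (Set.nonempty_coe_sort.1 hA.connected_compl.nonempty)
  have hcross {x y : W} (hx : x ∈ A) (hy : y ∉ A) (hxy : G.Adj x y) : x = a ∧ y = b :=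
    hA.eq_and_eq_of_adj hG.isAcyclic hx hy hxy ha hb hab
  have hA_tree : (G.induce A).IsTree := ⟨hA.connected, hG.isAcyclic.induce A⟩
  rcases subsingleton_or_nontrivial A with hsub | hnontriv
  · have hneighbor : G.neighborSet a = {b} := by
      ext y
      refine ⟨fun hay => (hcross ha (fun hy => ?_) hay).2, fun hy => hy ▸ hab⟩
      exact hay.ne (congrArg Subtype.val (hsub.elim ⟨a, ha⟩ ⟨y, hy⟩))
    exact ⟨a, ha, Set.ncard_eq_one.2 ⟨b, hneighbor⟩⟩
  · obtain ⟨⟨x, hx⟩, hxa, hdeg⟩ : ∃ x : A, x.1 ≠ a ∧ (G.induce A).degree x = 1 := by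
      obtain ⟨u, v, huv, hu, hv⟩ := hA_tree.exists_ne_and_degree_eq_one
      by_cases hua : u.1 = a
      · exact ⟨v, fun hva => huv (Subtype.ext (hua.trans hva.symm)), hv⟩
      · exact ⟨u, hua, hu⟩
    obtain ⟨⟨y, hy⟩, hxy, hunique⟩ := SimpleGraph.degree_eq_one_iff_existsUnique_adj.1 hdeg
    have hneighbor : G.neighborSet x = {y} := by
      ext z
      refine ⟨fun hxz => ?_, fun hz => hz ▸ hxy⟩
      have hz : z ∈ A := by_contra fun hz => hxa (hcross hx hz hxz).1
      exact congrArg Subtype.val (hunique ⟨z, hz⟩ hxz)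
    exact ⟨x, hx, Set.ncard_eq_one.2 ⟨y, hneighbor⟩⟩

lemma card_le_ncard_treeLeaves_of_pairwise_disjoint {ι : Type*} (hG : G.IsTree) {A : ι → Set W}
    (hA : ∀ i, IsBondSide G (A i)) (hdisj : Pairwise fun i j => Disjoint (A i) (A j)) :
    Nat.card ι ≤ (treeLeaves G).ncard := by
  choose f hfA hf using fun i => (hA i).exists_mem_treeLeaves hG
  have hinj : Function.Injective f := fun i j hij =>
    hdisj.eq (Set.not_disjoint_iff.2 ⟨f i, hfA i, hij ▸ hfA j⟩)
  exact Nat.card_le_card_of_injective (Set.codRestrict f _ hf) (hinj.codRestrict hf)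

end Leaves

lemma pairwise_disjoint_or_pairwise_codisjoint {ι α : Type*} [DistribLattice α] [BoundedOrder α]
    {A : ι → α} (hanti : Pairwise fun i j => ¬ A i ≤ A j)
    (hA : Pairwise fun i j => Disjoint (A i) (A j) ∨ Codisjoint (A i) (A j)) :
    (Pairwise fun i j => Disjoint (A i) (A j)) ∨ Pairwise fun i j => Codisjoint (A i) (A j) := by
  have disjoint_of_disjoint {i j k : ι} (hij : Disjoint (A i) (A j)) (hjk : j ≠ k) :
      Disjoint (A j) (A k) := by
    by_cases hik : i = k
    · exact hik ▸ hij.symm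
    · exact (hA hjk).resolve_right fun h => hanti hik (hij.le_of_codisjoint h)
  by_cases h : ∃ i j, i ≠ j ∧ Disjoint (A i) (A j)
  · obtain ⟨i, j, -, hij⟩ := h
    refine .inl fun k l hkl => ?_
    by_cases hjk : j = k
    · subst hjk
      exact disjoint_of_disjoint hij hkl
    · exact disjoint_of_disjoint (disjoint_of_disjoint hij hjk) hkl
  · push Not at h
    exact .inr fun i j hij => (hA hij).resolve_left (h i j hij)

theorem card_le_ncard_treeLeaves_of_inter_nonempty_iff_ne {ι : Type*} {W : Type} [Finite W]
    {G : SimpleGraph W} (hG : G.IsTree) {S T : ι → Set W}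
    (hS : ∀ i, (G.induce (S i)).Connected) (hT : ∀ i, (G.induce (T i)).Connected)
    (hST : ∀ i j, (S i ∩ T j).Nonempty ↔ i ≠ j) : Nat.card ι ≤ (treeLeaves G).ncard := by
  have hdisj (i : ι) : Disjoint (S i) (T i) := by
    by_contra h
    exact (hST i i).1 (Set.not_disjoint_iff_nonempty_inter.1 h) rfl
  choose A hA hSA hTA using fun i =>
    IsBondSide.exists_separating hG.connected.preconnected (hS i) (hT i) (hdisj i)
  have hanti : Pairwise fun i j => ¬ A i ⊆ A j := fun i j hij hsub => by
    obtain ⟨x, hxS, hxT⟩ := (hST i j).2 hij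
    exact hTA j hxT (hsub (hSA i hxS))
  have hlaminar : Pairwise fun i j => Disjoint (A i) (A j) ∨ Codisjoint (A i) (A j) :=
    fun i j hij =>
      (((hA i).subset_or_subset_or_disjoint_or_codisjoint (hA j) hG.isAcyclic).resolve_left
        (hanti hij)).resolve_left (hanti hij.symm)
  rcases pairwise_disjoint_or_pairwise_codisjoint hanti hlaminar with h | h
  · exact card_le_ncard_treeLeaves_of_pairwise_disjoint hG hA h
  · exact card_le_ncard_treeLeaves_of_pairwise_disjoint hG (fun i => (hA i).compl)
      fun i j hij => disjoint_compl_right_iff.2 (codisjoint_iff_compl_le_right.1 (h hij))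

section Star

lemma connected_induce_starGraph {W : Type*} {r : W} {s : Set W} (hr : r ∈ s) :
    ((SimpleGraph.starGraph r).induce s).Connected :=
  .of_isUniversal (v := ⟨r, hr⟩) fun _ hne =>
    SimpleGraph.starGraph_center_adj (Subtype.coe_ne_coe.2 hne)

lemma neighborSet_starGraph_of_ne {W : Type*} {r x : W} (hx : x ≠ r) :
    (SimpleGraph.starGraph r).neighborSet x = {r} := by
  ext y
  simp only [SimpleGraph.mem_neighborSet, SimpleGraph.starGraph_adj, Set.mem_singleton_iff]
  grind

lemma treeLeaves_starGraph {W : Type} {r : W} (hr : ({r}ᶜ : Set W).ncard ≠ 1) :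
    treeLeaves (SimpleGraph.starGraph r) = {r}ᶜ := by
  ext x
  by_cases hx : x = r
  · subst hx
    simpa [treeLeaves, SimpleGraph.isUniversal_starGraph_self.neighborSet_eq] using hr
  · simp [treeLeaves, neighborSet_starGraph_of_ne hx, hx]

lemma ncard_compl_singleton_none (V : Type*) : ({none}ᶜ : Set (Option V)).ncard = Nat.card V := by
  rw [← Set.compl_range_some, compl_compl, Set.ncard_range_of_injective (Option.some_injective V)]

/-- The representation of an arbitrary digraph in the star with one leaf per vertex: sinks are
leaves, and the source set of `u` consists of the centre and the successors of `u`. -/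
def SubtreeRep.star {V : Type} (E : V → V → Prop) :
    SubtreeRep E (SimpleGraph.starGraph (none : Option V)) where
  src u := insert none (some '' {v | E u v})
  snk v := {some v}
  src_connected _ := connected_induce_starGraph (Set.mem_insert _ _)
  snk_connected _ := .of_subsingleton
  rep u v := by simp

end Star

section Leafage

variable {V : Type} [Finite V] {E : V → V → Prop}

theorem digLeafage_le_card (hV : Nat.card V ≠ 1) : digLeafage E ≤ Nat.card V := by
  refine Nat.sInf_le ⟨Option V, .ofFinite _, _, SimpleGraph.isTree_starGraph none,
    ⟨SubtreeRep.star E⟩, ?_⟩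
  rw [← ncard_compl_singleton_none] at hV ⊢
  rw [treeLeaves_starGraph hV]

theorem card_le_digLeafage {ι : Type*} (a b : ι → V) (hab : ∀ i j, E (a i) (b j) ↔ i ≠ j) :
    Nat.card ι ≤ digLeafage E := by
  refine le_csInf ⟨_, Option V, .ofFinite _, _, SimpleGraph.isTree_starGraph none,
    ⟨SubtreeRep.star E⟩, rfl⟩ ?_
  rintro k ⟨W, _, G, hG, ⟨R⟩, rfl⟩
  exact card_le_ncard_treeLeaves_of_inter_nonempty_iff_ne hG (fun i => R.src_connected (a i))
    (fun i => R.snk_connected (b i)) fun i j => (R.rep _ _).symm.trans (hab i j)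

end Leafage

theorem stmt_5_general {V : Type} [Finite V] (hV : Nat.card V ≠ 1) :
    digLeafage (fun u v : V => u ≠ v) = Nat.card V :=
  le_antisymm (digLeafage_le_card hV) (card_le_digLeafage id id fun _ _ => Iff.rfl)

/-- For `n ≥ 3`, the digraph `D_n` with adjacency matrix `J - I`
has leafage exactly `n`. -/
theorem stmt_5 (n : ℕ) (hn : 3 ≤ n) : digLeafage (DnRel n) = n :=
  (stmt_5_general (by rw [Nat.card_fin]; lia)).trans (Nat.card_fin n)
end
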